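/- Let X be a separable ultrametric space which is the union of a countable increasing sequence of closed balls, and let ν be a Borel measure on X which is finite on closed balls. Then the linear span of the indicator functions of closed balls of X is dense in L²(X,ν). -/

import Mathlib

open MeasureTheory

/-- A closed ball in a metric space: a set of the form `B̄(a,r)` with `r ≥ 0`. -/
def IsClosedBall {X : Type*} [MetricSpace X] (B : Set X) : Prop :=
  ∃ (a : X) (r : ℝ), 0 ≤ r ∧ B = Metric.closedBall a r

/-!
Fix a closed subgroup `K` of `Lᵖ` and a π-system `C` generating the σ-algebra, and suppose that `K`
contains the indicators of the members of `C`. For `B ∈ C` of finite measure, the measurable sets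
`s` such that the indicator of `s ∩ B` lies in `K` form a Dynkin system: for `p < ∞` the indicator
of a disjoint union of finite measure is the `Lᵖ`-sum of the indicators of the pieces. As this
system contains `C`, it contains every measurable set. If countably many such `B` cover the space,
cutting along them puts the indicator of every set of finite measure in `K`, so that `K` is all of
`Lᵖ`.

In an ultrametric space two closed balls are nested or disjoint, so closed balls form a π-system.
Those of positive radius are open and form a basis, so by separability balls generate the Borel
σ-algebra.
-/

open Set Filter Topology
open scoped ENNReal Function symmDiff

section Indicator

variable {α E ι : Type*} {m : MeasurableSpace α} {μ : Measure α} {p : ℝ≥0∞}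
  [NormedAddCommGroup E]

theorem tendsto_measure_iUnion_diff_biUnion_finset [Countable ι] {s : ι → Set α}
    (hs : ∀ i, NullMeasurableSet (s i) μ) (hμs : μ (⋃ i, s i) ≠ ∞) :
    Tendsto (fun F : Finset ι ↦ μ ((⋃ i, s i) \ ⋃ i ∈ F, s i)) atTop (𝓝 0) := by
  have hinter : ⋂ F : Finset ι, (⋃ i, s i) \ ⋃ i ∈ F, s i = ∅ := by
    refine eq_empty_of_forall_notMem fun x hx ↦ ?_
    obtain ⟨i, hi⟩ := mem_iUnion.1 (mem_iInter.1 hx ∅).1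
    exact (mem_iInter.1 hx {i}).2 (by simpa using hi)
  rw [← measure_empty (μ := μ), ← hinter]
  refine tendsto_measure_iInter_atTop
    (fun F ↦ (NullMeasurableSet.iUnion hs).diff (F.nullMeasurableSet_biUnion fun i _ ↦ hs i))
    (fun F G hFG ↦ sdiff_subset_sdiff_right (biUnion_subset_biUnion_left hFG))
    ⟨∅, measure_ne_top_of_subset sdiff_subset hμs⟩

theorem indicatorConstLp_biUnion_finset {s : ι → Set α} (hs : ∀ i, MeasurableSet (s i))
    (hμs : ∀ i, μ (s i) ≠ ∞) (hd : Pairwise (Disjoint on s)) (F : Finset ι) (c : E) :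
    indicatorConstLp p (F.measurableSet_biUnion fun i _ ↦ hs i)
        (measure_biUnion_lt_top F.finite_toSet fun i _ ↦ (hμs i).lt_top).ne c =
      ∑ i ∈ F, indicatorConstLp p (hs i) (hμs i) c := by
  classical
  induction F using Finset.induction_on with
  | empty => simp
  | insert i F hi ih =>
    have hdisj : Disjoint (s i) (⋃ j ∈ F, s j) :=
      disjoint_iUnion₂_right.2 fun j hj ↦ hd (ne_of_mem_of_not_mem hj hi).symm
    rw [Finset.sum_insert hi, ← ih, ← indicatorConstLp_disjoint_union _ _ _ _ hdisj]
    simp only [Finset.set_biUnion_insert]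

theorem hasSum_indicatorConstLp_iUnion [Countable ι] [Fact (1 ≤ p)] (hp : p ≠ ∞)
    {s : ι → Set α} (hs : ∀ i, MeasurableSet (s i)) (hμs : μ (⋃ i, s i) ≠ ∞)
    (hd : Pairwise (Disjoint on s)) (c : E) :
    HasSum (fun i ↦ indicatorConstLp p (hs i)
        (measure_ne_top_of_subset (subset_iUnion s i) hμs) c)
      (indicatorConstLp p (MeasurableSet.iUnion hs) hμs c) := by
  simp only [HasSum, SummationFilter.unconditional_filter,
    ← indicatorConstLp_biUnion_finset hs _ hd]
  refine tendsto_indicatorConstLp_set hp ?_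
  have hsymm (F : Finset ι) : (⋃ i ∈ F, s i) ∆ (⋃ i, s i) = (⋃ i, s i) \ ⋃ i ∈ F, s i :=
    symmDiff_of_le (iUnion₂_subset_iUnion _ s)
  simpa only [hsymm] using
    tendsto_measure_iUnion_diff_biUnion_finset (fun i ↦ (hs i).nullMeasurableSet) hμs

theorem indicatorConstLp_smul {𝕜 : Type*} [NormedRing 𝕜] [Module 𝕜 E] [IsBoundedSMul 𝕜 E]
    {s : Set α} (hs : MeasurableSet s) (hμs : μ s ≠ ∞) (a : 𝕜) (c : E) :
    indicatorConstLp p hs hμs (a • c) = a • indicatorConstLp p hs hμs c := by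
  simp only [indicatorConstLp, ← MemLp.toLp_const_smul, ← indicator_const_smul, Pi.smul_def]

variable [Fact (1 ≤ p)] {K : AddSubgroup (Lp E p μ)} {C : Set (Set α)} {c : E}

theorem indicatorConstLp_iUnion_mem [Countable ι] (hp : p ≠ ∞) (hK : IsClosed (K : Set (Lp E p μ)))
    {s : ι → Set α} (hs : ∀ i, MeasurableSet (s i)) (hμs : μ (⋃ i, s i) ≠ ∞)
    (hd : Pairwise (Disjoint on s)) (hmem : ∀ i, indicatorConstLp p (hs i)
      (measure_ne_top_of_subset (subset_iUnion s i) hμs) c ∈ K) :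
    indicatorConstLp p (MeasurableSet.iUnion hs) hμs c ∈ K :=
  hK.mem_of_tendsto (hasSum_indicatorConstLp_iUnion hp hs hμs hd c)
    (.of_forall fun _ ↦ sum_mem fun i _ ↦ hmem i)

theorem indicatorConstLp_inter_mem_of_isPiSystem (hp : p ≠ ∞)
    (hK : IsClosed (K : Set (Lp E p μ))) (hgen : m = MeasurableSpace.generateFrom C)
    (hC : IsPiSystem C)
    (hmem : ∀ s ∈ C, ∀ (hs : MeasurableSet s) (hμs : μ s ≠ ∞), indicatorConstLp p hs hμs c ∈ K)
    {B : Set α} (hB : B ∈ C) (hBm : MeasurableSet B) (hμB : μ B ≠ ∞)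
    {s : Set α} (hs : MeasurableSet s) :
    indicatorConstLp p (hs.inter hBm) (measure_ne_top_of_subset inter_subset_right hμB) c ∈ K := by
  induction s, hs using MeasurableSpace.induction_on_inter hgen hC with
  | empty => simp
  | basic t ht =>
    obtain hempty | hne := (t ∩ B).eq_empty_or_nonempty
    · simp [hempty]
    · exact hmem _ (hC t ht B hB hne) _ _
  | compl t ht ih =>
    have hadd := indicatorConstLp_disjoint_union (p := p) (ht.inter hBm) (ht.compl.inter hBm)
      (measure_ne_top_of_subset inter_subset_right hμB)
      (measure_ne_top_of_subset inter_subset_right hμB)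
      (disjoint_compl_right.mono inter_subset_left inter_subset_left) c
    simp only [← union_inter_distrib_right, union_compl_self, univ_inter] at hadd
    exact (K.add_mem_cancel_left ih).1 (hadd ▸ hmem B hB hBm hμB)
  | iUnion t hd ht ih =>
    simp only [iUnion_inter]
    exact indicatorConstLp_iUnion_mem hp hK _ _
      (hd.mono fun _ _ h ↦ h.mono inter_subset_left inter_subset_left) ih

theorem indicatorConstLp_mem_of_isPiSystem (hp : p ≠ ∞)
    (hK : IsClosed (K : Set (Lp E p μ))) (hgen : m = MeasurableSpace.generateFrom C)
    (hC : IsPiSystem C) (D : μ.FiniteSpanningSetsIn C)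
    (hmem : ∀ s ∈ C, ∀ (hs : MeasurableSet s) (hμs : μ s ≠ ∞), indicatorConstLp p hs hμs c ∈ K)
    {s : Set α} (hs : MeasurableSet s) (hμs : μ s ≠ ∞) :
    indicatorConstLp p hs hμs c ∈ K := by
  have hDm (n : ℕ) : MeasurableSet (D.set n) :=
    hgen.ge _ (MeasurableSpace.measurableSet_generateFrom (D.set_mem n))
  have hm (n : ℕ) : MeasurableSet (s ∩ disjointed D.set n) := hs.inter (.disjointed hDm n)
  have hunion : ⋃ n, s ∩ disjointed D.set n = s := by
    rw [← inter_iUnion, iUnion_disjointed, D.spanning, inter_univ]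
  have hinter (n : ℕ) : s ∩ disjointed D.set n ∩ D.set n = s ∩ disjointed D.set n :=
    inter_eq_left.2 (inter_subset_right.trans (disjointed_subset _ n))
  have hpiece (n : ℕ) : indicatorConstLp p (hm n)
      (measure_ne_top_of_subset inter_subset_left hμs) c ∈ K := by
    simpa only [hinter] using indicatorConstLp_inter_mem_of_isPiSystem hp hK hgen hC hmem
      (D.set_mem n) (hDm n) (D.finite n).ne (hm n)
  have hdisj : Pairwise (Disjoint on fun n ↦ s ∩ disjointed D.set n) :=
    (disjoint_disjointed D.set).mono fun _ _ h ↦ h.mono inter_subset_right inter_subset_right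
  simpa only [hunion] using
    indicatorConstLp_iUnion_mem hp hK hm (by rwa [hunion]) hdisj hpiece

theorem Lp_addSubgroup_eq_top_of_indicatorConstLp_mem (hp : p ≠ ∞)
    (hK : IsClosed (K : Set (Lp E p μ)))
    (hmem : ∀ (c : E) (s : Set α) (hs : MeasurableSet s) (hμs : μ s ≠ ∞),
      indicatorConstLp p hs hμs c ∈ K) : K = ⊤ := by
  refine (AddSubgroup.eq_top_iff' K).2 fun f ↦ ?_
  induction f using Lp.induction hp with
  | indicatorConst c hs hμs =>
    simpa only [Lp.simpleFunc.coe_indicatorConst] using hmem c _ hs hμs.ne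
  | add hf hg _ hfK hgK => exact add_mem hfK hgK
  | isClosed => exact hK

theorem topologicalClosure_span_indicatorConstLp_eq_top {𝕜 : Type*} [NormedRing 𝕜]
    (hp : p ≠ ∞) (hgen : m = MeasurableSpace.generateFrom C) (hC : IsPiSystem C)
    (D : μ.FiniteSpanningSetsIn C) :
    (Submodule.span 𝕜 {g : Lp 𝕜 p μ | ∃ (s : Set α) (hs : MeasurableSet s) (hμs : μ s ≠ ∞),
      s ∈ C ∧ g = indicatorConstLp p hs hμs (1 : 𝕜)}).topologicalClosure = ⊤ := by
  set V := Submodule.span 𝕜 {g : Lp 𝕜 p μ | ∃ (s : Set α) (hs : MeasurableSet s)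
    (hμs : μ s ≠ ∞), s ∈ C ∧ g = indicatorConstLp p hs hμs (1 : 𝕜)}
  have hclosed : IsClosed (V.topologicalClosure.toAddSubgroup : Set (Lp 𝕜 p μ)) :=
    V.isClosed_topologicalClosure
  refine Submodule.toAddSubgroup_injective <|
    Lp_addSubgroup_eq_top_of_indicatorConstLp_mem hp hclosed fun c s hs hμs ↦
      indicatorConstLp_mem_of_isPiSystem hp hclosed hgen hC D (fun t htC ht hμt ↦ ?_) hs hμs
  rw [← mul_one c, ← smul_eq_mul, indicatorConstLp_smul]
  exact V.topologicalClosure.smul_mem c <|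
    V.le_topologicalClosure <| Submodule.subset_span ⟨t, ht, hμt, htC, rfl⟩

end Indicator

theorem isTopologicalBasis_closedBall (X : Type*) [PseudoMetricSpace X] [IsUltrametricDist X] :
    TopologicalSpace.IsTopologicalBasis
      {B : Set X | ∃ (a : X) (r : ℝ), 0 < r ∧ B = Metric.closedBall a r} := by
  refine TopologicalSpace.isTopologicalBasis_of_isOpen_of_nhds ?_ fun a U ha hU ↦ ?_
  · rintro _ ⟨a, r, hr, rfl⟩
    exact IsUltrametricDist.isOpen_closedBall a hr.ne'
  · obtain ⟨r, hr, hrU⟩ := Metric.nhds_basis_closedBall.mem_iff.1 (hU.mem_nhds ha)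
    exact ⟨_, ⟨a, r, hr, rfl⟩, Metric.mem_closedBall_self hr.le, hrU⟩

section ClosedBall

variable {X : Type*} [MetricSpace X]

theorem IsClosedBall.measurableSet [MeasurableSpace X] [OpensMeasurableSpace X] {B : Set X}
    (hB : IsClosedBall B) : MeasurableSet B := by
  obtain ⟨a, r, -, rfl⟩ := hB
  exact measurableSet_closedBall

variable (X) [IsUltrametricDist X]

theorem isPiSystem_isClosedBall : IsPiSystem {B : Set X | IsClosedBall B} := by
  rintro _ ⟨a, r, hr, rfl⟩ _ ⟨b, s, hs, rfl⟩ hne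
  rcases IsUltrametricDist.closedBall_subset_trichotomy a b r s with hab | hba | hdisj
  · exact ⟨a, r, hr, inter_eq_left.2 hab⟩
  · exact ⟨b, s, hs, inter_eq_right.2 hba⟩
  · exact absurd hdisj.inter_eq hne.ne_empty

theorem borel_eq_generateFrom_isClosedBall [SecondCountableTopology X] :
    borel X = MeasurableSpace.generateFrom {B : Set X | IsClosedBall B} := by
  borelize X
  refine le_antisymm ?_ (MeasurableSpace.generateFrom_le fun B hB ↦ hB.measurableSet)
  rw [(isTopologicalBasis_closedBall X).borel_eq_generateFrom]
  refine MeasurableSpace.generateFrom_mono ?_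
  rintro _ ⟨a, r, hr, rfl⟩
  exact ⟨a, r, hr.le, rfl⟩

end ClosedBall

theorem ultrametric_ball_indicators_dense_general {X 𝕜 : Type*} [MetricSpace X]
    [IsUltrametricDist X] [TopologicalSpace.SeparableSpace X] [MeasurableSpace X] [BorelSpace X]
    [NormedRing 𝕜] (ν : Measure X) (hν : ∀ B : Set X, IsClosedBall B → ν B < ∞)
    {p : ℝ≥0∞} [Fact (1 ≤ p)] (hp : p ≠ ∞) :
    (Submodule.span 𝕜 {g : Lp 𝕜 p ν |
        ∃ (B : Set X) (hm : MeasurableSet B) (hfin : ν B ≠ ∞),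
          IsClosedBall B ∧ g = indicatorConstLp p hm hfin (1 : 𝕜)}).topologicalClosure = ⊤ := by
  have : SecondCountableTopology X := UniformSpace.secondCountable_of_separable X
  obtain _ | ⟨⟨x₀⟩⟩ := isEmpty_or_nonempty X
  · refine Submodule.eq_top_iff'.2 fun f ↦ ?_
    have hf : f = 0 := Lp.ext (.of_forall isEmptyElim)
    exact hf ▸ zero_mem _
  have hball (n : ℕ) : IsClosedBall (Metric.closedBall x₀ n) := ⟨x₀, n, n.cast_nonneg, rfl⟩
  let D : ν.FiniteSpanningSetsIn {B : Set X | IsClosedBall B} :=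
    ⟨fun n ↦ Metric.closedBall x₀ n, hball, fun n ↦ hν _ (hball n), Metric.iUnion_closedBall_nat x₀⟩
  exact topologicalClosure_span_indicatorConstLp_eq_top hp
    (BorelSpace.measurable_eq.trans (borel_eq_generateFrom_isClosedBall X))
    (isPiSystem_isClosedBall X) D

/-- In a separable ultrametric space which is the union of a countable increasing
sequence of closed balls, with a Borel measure finite on closed balls, the linear
span of the indicator functions of closed balls is dense in `L²(X,ν)`. -/
theorem ultrametric_ball_indicators_dense {X : Type*} [MetricSpace X]
    [IsUltrametricDist X] [TopologicalSpace.SeparableSpace X]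
    [MeasurableSpace X] [BorelSpace X] (ν : Measure X)
    (hexh : ∃ D : ℕ → Set X, (∀ n, IsClosedBall (D n)) ∧ Monotone D ∧
      (⋃ n, D n) = Set.univ)
    (hν : ∀ B : Set X, IsClosedBall B → ν B < ⊤) :
    (Submodule.span ℂ {g : Lp ℂ 2 ν |
        ∃ (B : Set X) (hm : MeasurableSet B) (hfin : ν B ≠ ⊤),
          IsClosedBall B ∧ g = indicatorConstLp 2 hm hfin (1 : ℂ)}).topologicalClosure
      = ⊤ :=
  ultrametric_ball_indicators_dense_general ν hν ENNReal.ofNat_ne_top
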